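/- Let T be a truss and consider a commutative diagram of left T-modules with rows M'→φ→M→ψ→M''→⋆ and ⋆⇢N'→φ₁→N→ψ₁→N'', and vertical morphisms f':M'→N', f:M→N, f'':M''→N'' with f∘φ=φ₁∘f' and f''∘ψ=ψ₁∘f, where ψ is surjective, φ₁ is injective, there exists m''∈Im ψ with Im φ=ker_{m''}ψ, and there exists n''∈Im ψ₁ with Im φ₁=ker_{n''}ψ₁. Assume Abs(M') is nonempty. If f' and f'' are surjective, then f is surjective. Consequently, if f' and f'' are bijective, then f is bijective. -/

import Mathlib

/-!
Fix `x₀ : M'` and put `y = φ x₀`, so that `y` and `f y = φ₁ (f' x₀)` lie in the fibres which are the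
images of `φ` and `φ₁`. The translation `a ↦ [a, b, y]` moves the `ψ`-fibre of `b` onto `Im φ` and is
undone by `c ↦ [c, y, b]`; likewise in `N`. This replaces the subtraction of the classical five
lemma: a difference of two elements with the same image in the third column is translated into the
first column, where `f'` applies.
-/

/-- A truss: an abelian heap with an associative multiplication distributing
over the ternary heap operation. -/
structure Truss (T : Type*) where
  bkt : T → T → T → T
  mul : T → T → T
  bkt_assoc : ∀ a b c d e, bkt (bkt a b c) d e = bkt a b (bkt c d e)
  bkt_idr : ∀ a b, bkt a b b = a
  bkt_idl : ∀ a b, bkt b b a = a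
  bkt_comm : ∀ a b c, bkt a b c = bkt c b a
  mul_assoc : ∀ a b c, mul (mul a b) c = mul a (mul b c)
  mul_bkt : ∀ w x y z, mul w (bkt x y z) = bkt (mul w x) (mul w y) (mul w z)
  bkt_mul : ∀ w x y z, mul (bkt x y z) w = bkt (mul x w) (mul y w) (mul z w)

/-- A left module over a truss `τ`: an abelian heap `M` with an action of `T`. -/
structure TMod {T : Type*} (τ : Truss T) (M : Type*) where
  bkt : M → M → M → M
  smul : T → M → M
  bkt_assoc : ∀ a b c d e, bkt (bkt a b c) d e = bkt a b (bkt c d e)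
  bkt_idr : ∀ a b, bkt a b b = a
  bkt_idl : ∀ a b, bkt b b a = a
  bkt_comm : ∀ a b c, bkt a b c = bkt c b a
  smul_mul : ∀ t t' m, smul t (smul t' m) = smul (τ.mul t t') m
  bkt_smul : ∀ t t' t'' m, smul (τ.bkt t t' t'') m = bkt (smul t m) (smul t' m) (smul t'' m)
  smul_bkt : ∀ t m m' m'', smul t (bkt m m' m'') = bkt (smul t m) (smul t m') (smul t m'')

/-- A morphism of modules over a truss. -/
def IsTModHom {T M N : Type*} {τ : Truss T} (μM : TMod τ M) (μN : TMod τ N) (f : M → N) : Prop :=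
  (∀ a b c, f (μM.bkt a b c) = μN.bkt (f a) (f b) (f c)) ∧
  ∀ t m, f (μM.smul t m) = μN.smul t (f m)

/-- `ker_e f`, the fibre of `f` over `e`. -/
def kerAt {M N : Type*} (f : M → N) (e : N) : Set M := {m | f m = e}

/-- The set of absorbers of a module over a truss. -/
def Abs {T M : Type*} {τ : Truss T} (μM : TMod τ M) : Set M := {m | ∀ t, μM.smul t m = m}

/-- A submodule: a nonempty subset closed under the heap operation and the action. -/
def IsSubMod {T M : Type*} {τ : Truss T} (μM : TMod τ M) (S : Set M) : Prop :=
  S.Nonempty ∧ (∀ a ∈ S, ∀ b ∈ S, ∀ c ∈ S, μM.bkt a b c ∈ S) ∧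
    ∀ t : T, ∀ m ∈ S, μM.smul t m ∈ S

/-- The congruence on `N` induced by a subset `S`. -/
def CongMod {T N : Type*} {τ : Truss T} (μN : TMod τ N) (S : Set N) (a b : N) : Prop :=
  ∃ s ∈ S, μN.bkt a b s ∈ S

/-- `π : N → Q` realizes `Q` as the quotient module `N/S`. -/
def IsQuotientMod {T N Q : Type*} {τ : Truss T} (μN : TMod τ N) (S : Set N) (μQ : TMod τ Q)
    (π : N → Q) : Prop :=
  IsTModHom μN μQ π ∧ Function.Surjective π ∧
    ∀ a b : N, π a = π b ↔ CongMod μN S a b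

/-- A short exact sequence `⋆ ⇢ A → B → C → ⋆` of modules over a truss
(on underlying maps). -/
def IsShortExactSeq {A B C : Type*} (f : A → B) (g : B → C) : Prop :=
  Function.Injective f ∧ Function.Surjective g ∧
    ∃ e ∈ Set.range g, Set.range f = kerAt g e

/-- The induced module structure on a submodule. -/
def TMod.sub {T M : Type*} {τ : Truss T} (μM : TMod τ M) (S : Set M) (hS : IsSubMod μM S) :
    TMod τ S where
  bkt a b c := ⟨μM.bkt a b c, hS.2.1 a a.2 b b.2 c c.2⟩
  smul t m := ⟨μM.smul t m, hS.2.2 t m m.2⟩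
  bkt_assoc a b c d e := Subtype.ext (μM.bkt_assoc a b c d e)
  bkt_idr a b := Subtype.ext (μM.bkt_idr a b)
  bkt_idl a b := Subtype.ext (μM.bkt_idl a b)
  bkt_comm a b c := Subtype.ext (μM.bkt_comm a b c)
  smul_mul t t' m := Subtype.ext (μM.smul_mul t t' m)
  bkt_smul t t' t'' m := Subtype.ext (μM.bkt_smul t t' t'' m)
  smul_bkt t m m' m'' := Subtype.ext (μM.smul_bkt t m m' m'')

/-- The product of two modules over a truss, with componentwise operations. -/
def TMod.prod {T M N : Type*} {τ : Truss T} (μM : TMod τ M) (μN : TMod τ N) :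
    TMod τ (M × N) where
  bkt a b c := (μM.bkt a.1 b.1 c.1, μN.bkt a.2 b.2 c.2)
  smul t m := (μM.smul t m.1, μN.smul t m.2)
  bkt_assoc := fun _ _ _ _ _ => Prod.ext (μM.bkt_assoc _ _ _ _ _) (μN.bkt_assoc _ _ _ _ _)
  bkt_idr := fun _ _ => Prod.ext (μM.bkt_idr _ _) (μN.bkt_idr _ _)
  bkt_idl := fun _ _ => Prod.ext (μM.bkt_idl _ _) (μN.bkt_idl _ _)
  bkt_comm := fun _ _ _ => Prod.ext (μM.bkt_comm _ _ _) (μN.bkt_comm _ _ _)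
  smul_mul := fun _ _ _ => Prod.ext (μM.smul_mul _ _ _) (μN.smul_mul _ _ _)
  bkt_smul := fun _ _ _ _ => Prod.ext (μM.bkt_smul _ _ _ _) (μN.bkt_smul _ _ _ _)
  smul_bkt := fun _ _ _ _ => Prod.ext (μM.smul_bkt _ _ _ _) (μN.smul_bkt _ _ _ _)

/-- The truss `T(R)` associated with a ring `R`. -/
def Truss.ofRing (R : Type*) [Ring R] : Truss R where
  bkt a b c := a - b + c
  mul a b := a * b
  bkt_assoc a b c d e := by show a - b + c - d + e = a - b + (c - d + e); abel
  bkt_idr a b := by show a - b + b = a; abel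
  bkt_idl a b := by show b - b + a = a; abel
  bkt_comm a b c := by show a - b + c = c - b + a; abel
  mul_assoc a b c := by show a * b * c = a * (b * c); rw [_root_.mul_assoc]
  mul_bkt w x y z := by show w * (x - y + z) = w * x - w * y + w * z; rw [mul_add, mul_sub]
  bkt_mul w x y z := by show (x - y + z) * w = x * w - y * w + z * w; rw [add_mul, sub_mul]

/-- The `T(R)`-module `T(M)` associated with an `R`-module `M`. -/
def TMod.ofModule (R : Type*) [Ring R] (M : Type*) [AddCommGroup M] [Module R M] :
    TMod (Truss.ofRing R) M where
  bkt x y z := x - y + z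
  smul r m := r • m
  bkt_assoc a b c d e := by show a - b + c - d + e = a - b + (c - d + e); abel
  bkt_idr a b := by show a - b + b = a; abel
  bkt_idl a b := by show b - b + a = a; abel
  bkt_comm a b c := by show a - b + c = c - b + a; abel
  smul_mul t t' m := by show t • t' • m = (t * t') • m; rw [smul_smul]
  bkt_smul t t' t'' m := by
    show (t - t' + t'') • m = t • m - t' • m + t'' • m
    rw [add_smul, sub_smul]
  smul_bkt t x y z := by
    show t • (x - y + z) = t • x - t • y + t • z
    rw [smul_add, smul_sub]

/-- The set of `T`-module morphisms from `Q` to `M`. -/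
def THom {T Q M : Type*} {τ : Truss T} (μQ : TMod τ Q) (μM : TMod τ M) : Type _ :=
  {α : Q → M // IsTModHom μQ μM α}

/-- The translations `a ↦ [a, b, y]` and `c ↦ [c, y, b]` are mutually inverse. -/
theorem TMod.bkt_bkt_cancel {T M : Type*} {τ : Truss T} (μM : TMod τ M) (a b y : M) :
    μM.bkt (μM.bkt a b y) y b = a := by
  rw [μM.bkt_assoc, μM.bkt_idl, μM.bkt_idr]

/-- if `f'` and `f''` are surjective, so is `f`; consequently
bijectivity of `f'` and `f''` implies bijectivity of `f`. -/
theorem stmt10 {T M' M M'' N' N N'' : Type*} (τ : Truss T)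
    (μM' : TMod τ M') (μM : TMod τ M) (μM'' : TMod τ M'')
    (μN' : TMod τ N') (μN : TMod τ N) (μN'' : TMod τ N'')
    (φ : M' → M) (ψ : M → M'') (φ₁ : N' → N) (ψ₁ : N → N'')
    (f' : M' → N') (f : M → N) (f'' : M'' → N'')
    (hφ : IsTModHom μM' μM φ) (hψ : IsTModHom μM μM'' ψ)
    (hφ₁ : IsTModHom μN' μN φ₁) (hψ₁ : IsTModHom μN μN'' ψ₁)
    (hf' : IsTModHom μM' μN' f') (hf : IsTModHom μM μN f)
    (hf'' : IsTModHom μM'' μN'' f'')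
    (hsq1 : f ∘ φ = φ₁ ∘ f') (hsq2 : f'' ∘ ψ = ψ₁ ∘ f)
    (hψs : Function.Surjective ψ) (hφ₁i : Function.Injective φ₁)
    (hrow1 : ∃ m'' ∈ Set.range ψ, Set.range φ = kerAt ψ m'')
    (hrow2 : ∃ n'' ∈ Set.range ψ₁, Set.range φ₁ = kerAt ψ₁ n'')
    (habs : (Abs μM').Nonempty) :
    (Function.Surjective f' → Function.Surjective f'' → Function.Surjective f) ∧
    (Function.Bijective f' → Function.Bijective f'' → Function.Bijective f) := by
  obtain ⟨x₀, -⟩ := habs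
  obtain ⟨m'', -, hφr⟩ := hrow1
  obtain ⟨n'', -, hφ₁r⟩ := hrow2
  have sq1 : ∀ x, f (φ x) = φ₁ (f' x) := congrFun hsq1
  have sq2 : ∀ m, f'' (ψ m) = ψ₁ (f m) := congrFun hsq2
  have hm : ψ (φ x₀) = m'' := hφr.subset ⟨x₀, rfl⟩
  have hn : ψ₁ (f (φ x₀)) = n'' := by
    rw [sq1]
    exact hφ₁r.subset ⟨f' x₀, rfl⟩
  have surj : Function.Surjective f' → Function.Surjective f'' → Function.Surjective f := by
    intro h' h'' n
    obtain ⟨k, hk⟩ := h'' (ψ₁ n)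
    obtain ⟨m, rfl⟩ := hψs k
    rw [sq2] at hk
    have hmem : μN.bkt n (f m) (f (φ x₀)) ∈ kerAt ψ₁ n'' := by
      change ψ₁ _ = n''
      rw [hψ₁.1, hk, μN''.bkt_idl, hn]
    obtain ⟨n', hn'⟩ := hφ₁r.superset hmem
    obtain ⟨x, rfl⟩ := h' n'
    refine ⟨μM.bkt (φ x) (φ x₀) m, ?_⟩
    rw [hf.1, sq1 x, hn', μN.bkt_bkt_cancel]
  refine ⟨surj, fun h' h'' => ⟨fun a b hab => ?_, surj h'.2 h''.2⟩⟩
  have hψab : ψ a = ψ b := h''.1 (by rw [sq2, sq2, hab])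
  have hmem : μM.bkt a b (φ x₀) ∈ kerAt ψ m'' := by
    change ψ _ = m''
    rw [hψ.1, hψab, μM''.bkt_idl, hm]
  obtain ⟨x, hx⟩ := hφr.superset hmem
  have hxx : x = x₀ := by
    apply h'.1
    apply hφ₁i
    rw [← sq1, ← sq1, hx, hf.1, hab, μN.bkt_idl]
  rw [← μM.bkt_bkt_cancel a b (φ x₀), ← hx, hxx, μM.bkt_idl]
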